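/- Let V be a complex Banach space and let A : ℝ → Matrix (Fin p) (Fin p) ℂ be bounded and continuous with every entry almost automorphic, with fundamental matrix Φ_A, and suppose y' = A(t)y has an α-exponential dichotomy with constants c, α > 0 whose projection P commutes with Φ_A(t) for every t. Let f : ℝ → (Fin p → V) be bounded, continuous and almost automorphic. Then y(t) = ∫_ℝ G_A(t,s)·f(s) ds is the unique bounded differentiable solution of y'(t) = A(t)·y(t) + f(t) on ℝ (where the matrix acts on (Fin p → V) by scalar multiplication of entries), y is almost automorphic, and sup_{t∈ℝ} ‖y(t)‖ ≤ (2c/α)·sup_{t∈ℝ} ‖f(t)‖. -/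

import Mathlib

open MeasureTheory Filter Topology

attribute [local instance] Matrix.linftyOpNormedAddCommGroup Matrix.linftyOpNormedRing
  Matrix.linftyOpNormedAlgebra

/-- A continuous function `ψ : ℝ → V` into a Banach space is almost automorphic if for every
sequence of reals there is a subsequence `(τₙ)` and a function `ψ̃` with
`ψ(t+τₙ) → ψ̃(t)` and `ψ̃(t−τₙ) → ψ(t)` pointwise on `ℝ`. -/
def AlmostAutomorphic {V : Type*} [NormedAddCommGroup V] (ψ : ℝ → V) : Prop :=
  Continuous ψ ∧ ∀ σ : ℕ → ℝ, ∃ k : ℕ → ℕ, StrictMono k ∧ ∃ ψt : ℝ → V,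
    (∀ t : ℝ, Tendsto (fun n => ψ (t + σ (k n))) atTop (𝓝 (ψt t))) ∧
    (∀ t : ℝ, Tendsto (fun n => ψt (t - σ (k n))) atTop (𝓝 (ψ t)))

/-- `Φ` is a fundamental matrix of `y' = A(t) y`: it is differentiable with
`Φ'(t) = A(t) Φ(t)` and `Φ(t)` invertible for every `t`. -/
def IsFundamentalMatrix {p : ℕ} (A Φ : ℝ → Matrix (Fin p) (Fin p) ℂ) : Prop :=
  (∀ t : ℝ, HasDerivAt Φ (A t * Φ t) t) ∧ ∀ t : ℝ, IsUnit (Φ t)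

/-- The Green matrix associated with a projection `P` and a fundamental matrix `Φ`. -/
noncomputable def GreenMat {p : ℕ} (Φ : ℝ → Matrix (Fin p) (Fin p) ℂ)
    (P : Matrix (Fin p) (Fin p) ℂ) (t s : ℝ) : Matrix (Fin p) (Fin p) ℂ :=
  if s ≤ t then Φ t * (Φ s)⁻¹ * P else -(Φ t * (Φ s)⁻¹ * (1 - P))

/-- The action of a complex `p × p` matrix on vectors with entries in a complex vector space. -/
def matSMulVec {V : Type*} [AddCommGroup V] [Module ℂ V] {p : ℕ}
    (M : Matrix (Fin p) (Fin p) ℂ) (v : Fin p → V) : Fin p → V :=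
  fun i => ∑ j : Fin p, M i j • v j

set_option linter.unusedSectionVars false

section AbstractDichotomy

variable {W : Type*} [NormedAddCommGroup W] [NormedSpace ℝ W] [CompleteSpace W]

/-- Operator version of the Green matrix. -/
noncomputable def greenOp (U R : ℝ → W →L[ℝ] W) (Q : W →L[ℝ] W) (t s : ℝ) : W →L[ℝ] W :=
  if s ≤ t then U t * R s * Q else -(U t * R s * (1 - Q))

/-- Operator version of the hypotheses of the theorem. -/
structure OpDich (B U R : ℝ → W →L[ℝ] W) (Q : W →L[ℝ] W) (c α : ℝ) : Prop where
  hU : ∀ t, HasDerivAt U (B t * U t) t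
  hR : ∀ t, HasDerivAt R (-(R t * B t)) t
  hUR : ∀ t, U t * R t = 1
  hRU : ∀ t, R t * U t = 1
  hQ : ∀ t, U t * Q = Q * U t
  hα : 0 < α
  hc : 0 < c
  hG : ∀ t s, ‖greenOp U R Q t s‖ ≤ c * Real.exp (-α * |t - s|)

theorem integrable_exp_abs {α : ℝ} (hα : 0 < α) (t : ℝ) :
    Integrable (fun s : ℝ => Real.exp (-α * |t - s|)) := by
  have h0 : Integrable (fun s : ℝ => Real.exp (-α * |s|)) := by
    rw [← integrableOn_univ, ← Set.Iic_union_Ioi (a := (0:ℝ))]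
    refine IntegrableOn.union ?_ ?_
    · refine (integrableOn_exp_mul_Iic hα 0).congr_fun (fun x hx => ?_) measurableSet_Iic
      simp only [Set.mem_Iic] at hx
      simp [abs_of_nonpos hx]
    · refine (integrableOn_exp_mul_Ioi (neg_lt_zero.mpr hα) 0).congr_fun (fun x hx => ?_)
        measurableSet_Ioi
      simp only [Set.mem_Ioi] at hx
      simp [abs_of_pos hx]
  exact h0.comp_sub_left t

theorem integral_exp_abs {α : ℝ} (hα : 0 < α) (t : ℝ) :
    ∫ s : ℝ, Real.exp (-α * |t - s|) = 2 / α := by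
  rw [integral_sub_left_eq_self (fun s : ℝ => Real.exp (-α * |s|)) volume t,
    integral_comp_abs (f := fun s => Real.exp (-α * s)),
    integral_exp_mul_Ioi (neg_lt_zero.mpr hα) 0]
  simp
  field_simp

namespace OpDich

variable {B U R : ℝ → W →L[ℝ] W} {Q : W →L[ℝ] W} {c α : ℝ}

theorem RQ (h : OpDich B U R Q c α) (t : ℝ) : R t * Q = Q * R t := by
  calc R t * Q = R t * Q * (U t * R t) := by rw [h.hUR, mul_one]
    _ = R t * (Q * U t) * R t := by simp only [mul_assoc]
    _ = (R t * U t) * Q * R t := by rw [← h.hQ]; simp only [mul_assoc]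
    _ = Q * R t := by rw [h.hRU, one_mul]

theorem Rcont (h : OpDich B U R Q c α) : Continuous R :=
  continuous_iff_continuousAt.2 fun t => (h.hR t).continuousAt

theorem shift (h : OpDich B U R Q c α) (a : ℝ) :
    OpDich (fun t => B (t + a)) (fun t => U (t + a)) (fun t => R (t + a)) Q c α where
  hU t := (h.hU (t + a)).comp_add_const t a
  hR t := (h.hR (t + a)).comp_add_const t a
  hUR t := h.hUR _
  hRU t := h.hRU _
  hQ t := h.hQ _
  hα := h.hα
  hc := h.hc
  hG t s := by
    have := h.hG (t + a) (s + a)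
    simpa [greenOp] using this

theorem unique_zero (h : OpDich B U R Q c α) (w : ℝ → W)
    (hw : ∀ t, HasDerivAt w (B t (w t)) t) (K : ℝ) (hK : ∀ t, ‖w t‖ ≤ K) (t : ℝ) : w t = 0 := by
  have hv : ∀ t, HasDerivAt (fun t => R t (w t)) 0 t := fun t => by
    have := (h.hR t).clm_apply (hw t)
    simpa using this
  have hconst : ∀ s t, R s (w s) = R t (w t) := fun s t =>
    is_const_of_deriv_eq_zero (fun x => (hv x).differentiableAt) (fun x => (hv x).deriv) s t
  have hw1 : ∀ s, w t = U t (R s (w s)) := fun s => by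
    rw [hconst s t, ← mul_apply_eq_comp, h.hUR]; rfl
  have hQw : ∀ s, Q (w t) = (U t * R s * Q) (w s) := fun s => by
    rw [hw1 s, mul_assoc, h.RQ, ← mul_assoc, h.hQ]; rfl
  have hexp : Tendsto (fun x : ℝ => c * Real.exp (-α * x) * K) atTop (𝓝 0) := by
    have h1 : Tendsto (fun x : ℝ => Real.exp (-α * x)) atTop (𝓝 0) :=
      Real.tendsto_exp_atBot.comp (tendsto_id.const_mul_atTop_of_neg (neg_lt_zero.mpr h.hα))
    simpa using (h1.const_mul c).mul_const K
  have e1 : Q (w t) = 0 := by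
    refine norm_le_zero_iff.1 (ge_of_tendsto hexp ?_)
    filter_upwards [eventually_ge_atTop 0] with x hx
    rw [hQw (t - x)]
    have := h.hG t (t - x)
    rw [greenOp, if_pos (by linarith)] at this
    rw [sub_sub_cancel, abs_of_nonneg hx] at this
    refine (ContinuousLinearMap.le_of_opNorm_le _ this _).trans ?_
    have := h.hc
    gcongr
    exact hK _
  have e2 : (1 - Q) (w t) = 0 := by
    refine norm_le_zero_iff.1 (ge_of_tendsto hexp ?_)
    filter_upwards [eventually_gt_atTop 0] with x hx
    have h3 : (1 - Q) (w t) = (U t * R (t + x) * (1 - Q)) (w (t + x)) := by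
      rw [mul_sub, mul_one, sub_apply, sub_apply,
        ← hQw (t + x), mul_apply_eq_comp, ← hw1]; rfl
    rw [h3]
    have := h.hG t (t + x)
    rw [greenOp, if_neg (by linarith), norm_neg] at this
    rw [sub_add_cancel_left, abs_neg, abs_of_pos hx] at this
    refine (ContinuousLinearMap.le_of_opNorm_le _ this _).trans ?_
    have := h.hc
    gcongr
    exact hK _
  have : w t = Q (w t) + (1 - Q) (w t) := by simp
  rw [this, e1, e2, add_zero]

theorem norm_green_apply (h : OpDich B U R Q c α) (f : ℝ → W) (t s : ℝ) :
    ‖greenOp U R Q t s (f s)‖ ≤ c * Real.exp (-α * |t - s|) * ‖f s‖ :=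
  ContinuousLinearMap.le_of_opNorm_le _ (h.hG t s) _

theorem integrable_green (h : OpDich B U R Q c α) (f : ℝ → W) (hf : Continuous f)
    (K : ℝ) (hK : ∀ t, ‖f t‖ ≤ K) (t : ℝ) :
    Integrable (fun s => greenOp U R Q t s (f s)) := by
  refine (((integrable_exp_abs h.hα t).const_mul c).mul_const K).mono' ?_ ?_
  · have h1 : Continuous (fun s => (U t * R s * Q) (f s)) :=
      ((continuous_const.mul h.Rcont).mul continuous_const).clm_apply hf
    have h2 : Continuous (fun s => (-(U t * R s * (1 - Q))) (f s)) :=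
      ((continuous_const.mul h.Rcont).mul continuous_const).neg.clm_apply hf
    have : (fun s => greenOp U R Q t s (f s)) = Set.piecewise (Set.Iic t)
        (fun s => (U t * R s * Q) (f s)) (fun s => (-(U t * R s * (1 - Q))) (f s)) := by
      ext s
      by_cases hs : s ≤ t <;> simp [greenOp, Set.piecewise, hs]
    rw [this]
    exact AEStronglyMeasurable.piecewise measurableSet_Iic h1.aestronglyMeasurable
      h2.aestronglyMeasurable
  · refine Eventually.of_forall fun s => (h.norm_green_apply f t s).trans ?_
    have := h.hc
    gcongr
    exact hK _

theorem integrable_bound (h : OpDich B U R Q c α) (f : ℝ → W) (hf : Continuous f)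
    (K : ℝ) (hK : ∀ t, ‖f t‖ ≤ K) (t : ℝ) :
    Integrable (fun s => c * Real.exp (-α * |t - s|) * ‖f s‖) := by
  refine (((integrable_exp_abs h.hα t).const_mul c).mul_const K).mono' ?_ ?_
  · exact Continuous.aestronglyMeasurable (by fun_prop)
  · refine Eventually.of_forall fun s => ?_
    have := h.hc
    rw [Real.norm_of_nonneg (by positivity)]
    gcongr
    exact hK _

theorem norm_le_integral (h : OpDich B U R Q c α) (f : ℝ → W) (hf : Continuous f)
    (K : ℝ) (hK : ∀ t, ‖f t‖ ≤ K) (t : ℝ) :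
    ‖∫ s, greenOp U R Q t s (f s)‖ ≤ ∫ s, c * Real.exp (-α * |t - s|) * ‖f s‖ :=
  norm_integral_le_of_norm_le (h.integrable_bound f hf K hK t)
    (Eventually.of_forall fun s => h.norm_green_apply f t s)

theorem norm_le (h : OpDich B U R Q c α) (f : ℝ → W)
    (K : ℝ) (hK : ∀ t, ‖f t‖ ≤ K) (t : ℝ) :
    ‖∫ s, greenOp U R Q t s (f s)‖ ≤ 2 * c / α * K := by
  have h1 : ‖∫ s, greenOp U R Q t s (f s)‖ ≤ ∫ s, c * Real.exp (-α * |t - s|) * K :=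
    norm_integral_le_of_norm_le (((integrable_exp_abs h.hα t).const_mul c).mul_const K)
      (Eventually.of_forall fun s => (h.norm_green_apply f t s).trans (by
        have := h.hc
        gcongr
        exact hK _))
  rw [integral_mul_const, integral_const_mul, integral_exp_abs h.hα] at h1
  convert h1 using 1
  ring

theorem deriv_green (h : OpDich B U R Q c α) (f : ℝ → W) (hf : Continuous f)
    (K : ℝ) (hK : ∀ t, ‖f t‖ ≤ K) (t : ℝ) :
    HasDerivAt (fun t => ∫ s, greenOp U R Q t s (f s))
      (B t (∫ s, greenOp U R Q t s (f s)) + f t) t := by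
  have hI := h.integrable_green f hf K hK
  have hRU' : ∀ t x, R t (U t x) = x := fun t x => by
    rw [← mul_apply_eq_comp, h.hRU]; rfl
  have hUR' : ∀ t x, U t (R t x) = x := fun t x => by
    rw [← mul_apply_eq_comp, h.hUR]; rfl
  have hi1 : ∀ t, IntegrableOn (fun s => (R s * Q) (f s)) (Set.Iic t) := fun t => by
    have := ((R t).integrable_comp (hI t)).integrableOn (s := Set.Iic t)
    refine this.congr_fun (fun s hs => ?_) measurableSet_Iic
    have hs' : s ≤ t := hs
    simp [greenOp, hs', hRU']
  have hi2 : ∀ t, IntegrableOn (fun s => (R s * (1 - Q)) (f s)) (Set.Ioi t) := fun t => by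
    have := (((R t).integrable_comp (hI t)).neg).integrableOn (s := Set.Ioi t)
    refine this.congr_fun (fun s hs => ?_) measurableSet_Ioi
    have hs' : ¬ s ≤ t := not_le.2 hs
    simp [greenOp, hs', hRU']
  have hRf : Continuous (fun s => R s (f s)) := h.Rcont.clm_apply hf
  have hc1 : Continuous (fun s => (R s * Q) (f s)) :=
    (h.Rcont.mul continuous_const).clm_apply hf
  have hc2 : Continuous (fun s => (R s * (1 - Q)) (f s)) :=
    (h.Rcont.mul continuous_const).clm_apply hf
  set v0 : W := (∫ s in Set.Iic 0, (R s * Q) (f s)) - ∫ s in Set.Ioi 0, (R s * (1 - Q)) (f s)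
    with hv0
  have key : ∀ t, ∫ s, greenOp U R Q t s (f s) = U t (v0 + ∫ s in (0:ℝ)..t, R s (f s)) := by
    intro t
    rw [← intervalIntegral.integral_Iic_add_Ioi (b := t) (hI t).integrableOn (hI t).integrableOn]
    have a1 : ∫ s in Set.Iic t, greenOp U R Q t s (f s)
        = U t (∫ s in Set.Iic t, (R s * Q) (f s)) := by
      rw [← ContinuousLinearMap.integral_comp_comm _ (hi1 t)]
      refine setIntegral_congr_fun measurableSet_Iic fun s hs => ?_
      have hs' : s ≤ t := hs
      simp [greenOp, hs']
    have a2 : ∫ s in Set.Ioi t, greenOp U R Q t s (f s)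
        = - U t (∫ s in Set.Ioi t, (R s * (1 - Q)) (f s)) := by
      rw [← ContinuousLinearMap.integral_comp_comm _ (hi2 t), ← integral_neg]
      refine setIntegral_congr_fun measurableSet_Ioi fun s hs => ?_
      have hs' : ¬ s ≤ t := not_le.2 hs
      simp [greenOp, hs']
    have b1 := intervalIntegral.integral_Iic_sub_Iic (hi1 0) (hi1 t)
    have b2 := intervalIntegral.integral_interval_add_Ioi (hi2 0) (hi2 t)
    have b3 : ∫ s in (0:ℝ)..t, R s (f s) = (∫ s in (0:ℝ)..t, (R s * Q) (f s))
        + ∫ s in (0:ℝ)..t, (R s * (1 - Q)) (f s) := by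
      rw [← intervalIntegral.integral_add (hc1.intervalIntegrable _ _)
        (hc2.intervalIntegrable _ _)]
      congr 1
      ext s
      simp
    rw [a1, a2, b3, ← b1, hv0, ← b2, ← map_neg, ← map_add]
    congr 1
    abel
  have hd : HasDerivAt (fun t => v0 + ∫ s in (0:ℝ)..t, R s (f s)) (R t (f t)) t :=
    (intervalIntegral.integral_hasDerivAt_right (hRf.intervalIntegrable _ _)
      (hRf.stronglyMeasurableAtFilter _ _) hRf.continuousAt).const_add v0
  have := (h.hU t).clm_apply hd
  rw [funext key]
  simpa [hUR', key] using this

theorem unique (h : OpDich B U R Q c α) (f : ℝ → W) (hf : Continuous f)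
    (K : ℝ) (hK : ∀ t, ‖f t‖ ≤ K) (z : ℝ → W) (hz : ∀ t, HasDerivAt z (B t (z t) + f t) t)
    (M : ℝ) (hM : ∀ t, ‖z t‖ ≤ M) (t : ℝ) : z t = ∫ s, greenOp U R Q t s (f s) := by
  refine sub_eq_zero.1 (h.unique_zero (fun t => z t - ∫ s, greenOp U R Q t s (f s)) (fun t => ?_)
    (M + 2 * c / α * K) (fun t => ?_) t)
  · refine ((hz t).sub (h.deriv_green f hf K hK t)).congr_deriv ?_
    rw [map_sub]; abel
  · exact (norm_sub_le _ _).trans (add_le_add (hM t) (h.norm_le f K hK t))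

theorem shift_diff (h : OpDich B U R Q c α) (hB : Continuous B) (C : ℝ) (hC : ∀ t, ‖B t‖ ≤ C)
    (f : ℝ → W) (hf : Continuous f)
    (K : ℝ) (hK : ∀ t, ‖f t‖ ≤ K) (y : ℝ → W) (hy : y = fun t => ∫ s, greenOp U R Q t s (f s))
    (a b t : ℝ) :
    ‖y (t + a) - y (t + b)‖ ≤ ∫ s, c * Real.exp (-α * |t - s|) *
      (‖B (s + a) - B (s + b)‖ * (2 * c / α * K) + ‖f (s + a) - f (s + b)‖) := by
  have hyd : ∀ t, HasDerivAt y (B t (y t) + f t) t := fun t => by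
    rw [hy]; exact h.deriv_green f hf K hK t
  have hyb : ∀ t, ‖y t‖ ≤ 2 * c / α * K := fun t => by
    rw [hy]; exact h.norm_le f K hK t
  have hyc : Continuous y := continuous_iff_continuousAt.2 fun t => (hyd t).continuousAt
  set M := 2 * c / α * K with hM
  have hM0 : 0 ≤ M := (norm_nonneg _).trans (hyb 0)
  set g : ℝ → W := fun s => (B (s + a) - B (s + b)) (y (s + b)) + (f (s + a) - f (s + b)) with hg
  have hgc : Continuous g := by
    refine Continuous.add (Continuous.clm_apply ?_ ?_) ?_ <;> fun_prop
  have hgn : ∀ s, ‖g s‖ ≤ ‖B (s + a) - B (s + b)‖ * M + ‖f (s + a) - f (s + b)‖ := fun s =>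
    (norm_add_le _ _).trans (add_le_add_left
      (ContinuousLinearMap.le_opNorm_of_le _ (hyb _)) _)
  have hrb : ∀ s, ‖B (s + a) - B (s + b)‖ * M + ‖f (s + a) - f (s + b)‖
      ≤ (C + C) * M + (K + K) := fun s => by
    have h1 : ‖B (s + a) - B (s + b)‖ ≤ C + C := (norm_sub_le _ _).trans (add_le_add (hC _) (hC _))
    have h2 : ‖f (s + a) - f (s + b)‖ ≤ K + K := (norm_sub_le _ _).trans (add_le_add (hK _) (hK _))
    gcongr
  have hgb : ∀ s, ‖g s‖ ≤ (C + C) * M + (K + K) := fun s => (hgn s).trans (hrb s)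
  have hu := (h.shift a).unique g hgc _ hgb (fun t => y (t + a) - y (t + b)) (fun t => by
    refine (((hyd (t + a)).comp_add_const t a).sub ((hyd (t + b)).comp_add_const t b)).congr_deriv ?_
    simp only [hg, map_sub, sub_apply]
    abel) (M + M) (fun t => (norm_sub_le _ _).trans (add_le_add (hyb _) (hyb _))) t
  rw [hu]
  refine norm_integral_le_of_norm_le ?_ (Eventually.of_forall fun s =>
    ((h.shift a).norm_green_apply g t s).trans ?_)
  · refine (((integrable_exp_abs h.hα t).const_mul c).mul_const ((C + C) * M + (K + K))).mono' ?_ ?_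
    · exact Continuous.aestronglyMeasurable (by fun_prop)
    · refine Eventually.of_forall fun s => ?_
      have := h.hc
      rw [Real.norm_of_nonneg (by positivity)]
      exact mul_le_mul_of_nonneg_left (hrb s) (by positivity)
  · have := h.hc
    gcongr
    exact hgn s

/-- The right-hand side of `shift_diff`, along a family, tends to zero. -/
theorem tendsto_rhs (h : OpDich B U R Q c α) {ι : Type*} {l : Filter ι} [l.IsCountablyGenerated]
    (D : ι → ℝ → W →L[ℝ] W) (F : ι → ℝ → W) (t M C K : ℝ) (hM : 0 ≤ M)
    (hDm : ∀ i, AEStronglyMeasurable (D i)) (hFm : ∀ i, AEStronglyMeasurable (F i))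
    (hD : ∀ i s, ‖D i s‖ ≤ C) (hF : ∀ i s, ‖F i s‖ ≤ K)
    (hD0 : ∀ s, Tendsto (fun i => D i s) l (𝓝 0)) (hF0 : ∀ s, Tendsto (fun i => F i s) l (𝓝 0)) :
    Tendsto (fun i => ∫ s, c * Real.exp (-α * |t - s|) * (‖D i s‖ * M + ‖F i s‖)) l (𝓝 0) := by
  have := h.hc
  have key := tendsto_integral_filter_of_dominated_convergence (μ := volume) (l := l)
    (F := fun i s => c * Real.exp (-α * |t - s|) * (‖D i s‖ * M + ‖F i s‖)) (f := fun _ => 0)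
    (fun s => c * Real.exp (-α * |t - s|) * (C * M + K)) ?_ ?_ ?_ ?_
  · simpa using key
  · refine Eventually.of_forall fun i => ?_
    refine AEStronglyMeasurable.mul (Continuous.aestronglyMeasurable (by fun_prop)) ?_
    exact ((hDm i).norm.mul_const M).add (hFm i).norm
  · refine Eventually.of_forall fun i => Eventually.of_forall fun s => ?_
    rw [Real.norm_of_nonneg (by positivity)]
    gcongr
    · exact hD i s
    · exact hF i s
  · exact ((integrable_exp_abs h.hα t).const_mul c).mul_const _
  · refine Eventually.of_forall fun s => ?_
    have := (((hD0 s).norm.mul_const M).add (hF0 s).norm).const_mul (c * Real.exp (-α * |t - s|))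
    simpa using this

theorem aa (h : OpDich B U R Q c α) (hB : Continuous B) (C : ℝ) (hC : ∀ t, ‖B t‖ ≤ C)
    (f : ℝ → W) (hf : Continuous f)
    (K : ℝ) (hK : ∀ t, ‖f t‖ ≤ K) (y : ℝ → W) (hy : y = fun t => ∫ s, greenOp U R Q t s (f s))
    (τ : ℕ → ℝ) (Bt : ℝ → W →L[ℝ] W) (ft : ℝ → W)
    (hB1 : ∀ t, Tendsto (fun n => B (t + τ n)) atTop (𝓝 (Bt t)))
    (hB2 : ∀ t, Tendsto (fun n => Bt (t - τ n)) atTop (𝓝 (B t)))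
    (hf1 : ∀ t, Tendsto (fun n => f (t + τ n)) atTop (𝓝 (ft t)))
    (hf2 : ∀ t, Tendsto (fun n => ft (t - τ n)) atTop (𝓝 (f t))) :
    ∃ yt : ℝ → W, (∀ t, Tendsto (fun n => y (t + τ n)) atTop (𝓝 (yt t))) ∧
      (∀ t, Tendsto (fun n => yt (t - τ n)) atTop (𝓝 (y t))) := by
  have hd := h.shift_diff hB C hC f hf K hK y hy
  have hM0 : 0 ≤ 2 * c / α * K :=
    (norm_nonneg _).trans (h.norm_le f K hK 0)
  set M := 2 * c / α * K with hM
  have hBtC : ∀ t, ‖Bt t‖ ≤ C := fun t => le_of_tendsto' (hB1 t).norm fun n => hC _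
  have hftK : ∀ t, ‖ft t‖ ≤ K := fun t => le_of_tendsto' (hf1 t).norm fun n => hK _
  have hBtm : StronglyMeasurable Bt := stronglyMeasurable_of_tendsto atTop
    (f := fun n t => B (t + τ n)) (fun n => Continuous.stronglyMeasurable (by fun_prop))
    (tendsto_pi_nhds.2 hB1)
  have hftm : StronglyMeasurable ft := stronglyMeasurable_of_tendsto atTop
    (f := fun n t => f (t + τ n)) (fun n => Continuous.stronglyMeasurable (by fun_prop))
    (tendsto_pi_nhds.2 hf1)
  have hcauchy : ∀ t, CauchySeq (fun n => y (t + τ n)) := fun t => by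
    rw [cauchySeq_iff_tendsto_dist_atTop_0]
    have hr := h.tendsto_rhs (l := (atTop : Filter (ℕ × ℕ)))
      (fun n s => B (s + τ n.1) - B (s + τ n.2)) (fun n s => f (s + τ n.1) - f (s + τ n.2))
      t M (C + C) (K + K) hM0
      (fun i => Continuous.aestronglyMeasurable (by fun_prop))
      (fun i => Continuous.aestronglyMeasurable (by fun_prop))
      (fun i s => (norm_sub_le _ _).trans (add_le_add (hC _) (hC _)))
      (fun i s => (norm_sub_le _ _).trans (add_le_add (hK _) (hK _)))
      (fun s => by
        rw [← prod_atTop_atTop_eq]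
        simpa using ((hB1 s).comp tendsto_fst).sub ((hB1 s).comp tendsto_snd))
      (fun s => by
        rw [← prod_atTop_atTop_eq]
        simpa using ((hf1 s).comp tendsto_fst).sub ((hf1 s).comp tendsto_snd))
    refine squeeze_zero (fun n => dist_nonneg) (fun n => ?_) hr
    rw [dist_eq_norm]
    exact hd _ _ t
  choose yt hyt using fun t => cauchySeq_tendsto_of_complete (hcauchy t)
  refine ⟨yt, hyt, fun t => ?_⟩
  have hr := h.tendsto_rhs (l := (atTop : Filter ℕ))
      (fun n s => Bt (s - τ n) - B s) (fun n s => ft (s - τ n) - f s)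
      t M (C + C) (K + K) hM0
      (fun i => ((hBtm.comp_measurable (measurable_id.sub_const _)).sub
        hB.stronglyMeasurable).aestronglyMeasurable)
      (fun i => ((hftm.comp_measurable (measurable_id.sub_const _)).sub
        hf.stronglyMeasurable).aestronglyMeasurable)
      (fun i s => (norm_sub_le _ _).trans (add_le_add (hBtC _) (hC _)))
      (fun i s => (norm_sub_le _ _).trans (add_le_add (hftK _) (hK _)))
      (fun s => by simpa using (hB2 s).sub_const (B s))
      (fun s => by simpa using (hf2 s).sub_const (f s))
  rw [tendsto_iff_norm_sub_tendsto_zero]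
  refine squeeze_zero (fun n => norm_nonneg _) (fun n => ?_) hr
  have l1 : Tendsto (fun m => ‖y (t + (τ m - τ n)) - y (t + 0)‖) atTop
      (𝓝 ‖yt (t - τ n) - y t‖) := by
    refine Tendsto.norm (Tendsto.sub ?_ (by simp))
    refine (hyt (t - τ n)).congr fun m => ?_
    congr 1; ring
  have hs : ∀ s m, s - τ n + τ m = s + (τ m - τ n) := fun s m => by ring
  have l2 : Tendsto (fun m => ∫ s, c * Real.exp (-α * |t - s|) *
      (‖B (s + (τ m - τ n)) - B (s + 0)‖ * M + ‖f (s + (τ m - τ n)) - f (s + 0)‖)) atTop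
      (𝓝 (∫ s, c * Real.exp (-α * |t - s|) *
        (‖Bt (s - τ n) - B s‖ * M + ‖ft (s - τ n) - f s‖))) := by
    have := h.hc
    refine tendsto_integral_of_dominated_convergence
      (fun s => c * Real.exp (-α * |t - s|) * ((C + C) * M + (K + K))) (fun m => ?_) ?_
      (fun m => ?_) ?_
    · exact Continuous.aestronglyMeasurable (by fun_prop)
    · exact ((integrable_exp_abs h.hα t).const_mul c).mul_const _
    · refine Eventually.of_forall fun s => ?_
      rw [Real.norm_of_nonneg (by positivity)]
      gcongr
      · exact (norm_sub_le _ _).trans (add_le_add (hC _) (hC _))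
      · exact (norm_sub_le _ _).trans (add_le_add (hK _) (hK _))
    · refine Eventually.of_forall fun s => ?_
      have q1 := hB1 (s - τ n)
      have q2 := hf1 (s - τ n)
      simp only [hs] at q1 q2
      simp only [add_zero]
      exact (((q1.sub_const _).norm.mul_const M).add (q2.sub_const _).norm).const_mul _
  exact le_of_tendsto_of_tendsto' l1 l2 fun m => hd _ _ t

end OpDich

end AbstractDichotomy

section Concrete

variable {V : Type*} [NormedAddCommGroup V] [NormedSpace ℂ V] {p : ℕ}

theorem norm_matSMulVec_le (M : Matrix (Fin p) (Fin p) ℂ) (v : Fin p → V) :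
    ‖matSMulVec M v‖ ≤ ‖M‖ * ‖v‖ := by
  refine (pi_norm_le_iff_of_nonneg (by positivity)).2 fun i => ?_
  have h1 : ∑ j, ‖M i j‖ ≤ ‖M‖ := by
    rw [Matrix.linfty_opNorm_def]
    have := Finset.le_sup (f := fun i => ∑ j, ‖M i j‖₊) (Finset.mem_univ i)
    have h2 : ((∑ j, ‖M i j‖₊ : NNReal) : ℝ) ≤ _ := NNReal.coe_le_coe.2 this
    simpa using h2
  calc ‖matSMulVec M v i‖ ≤ ∑ j, ‖M i j • v j‖ := norm_sum_le _ _
    _ ≤ ∑ j, ‖M i j‖ * ‖v‖ := Finset.sum_le_sum fun j _ => by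
        rw [norm_smul]
        gcongr
        exact norm_le_pi_norm v j
    _ = (∑ j, ‖M i j‖) * ‖v‖ := by rw [Finset.sum_mul]
    _ ≤ ‖M‖ * ‖v‖ := by gcongr

variable (V p) in
/-- The action of matrices as a continuous linear map into bounded operators. -/
noncomputable def matOp :
    Matrix (Fin p) (Fin p) ℂ →L[ℝ] ((Fin p → V) →L[ℝ] (Fin p → V)) :=
  LinearMap.mkContinuous₂
    (LinearMap.mk₂ ℝ (fun M v => matSMulVec M v)
      (fun M N v => by ext i; simp [matSMulVec, add_smul, Finset.sum_add_distrib])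
      (fun r M v => by
        ext i
        simp only [matSMulVec, Finset.smul_sum, Pi.smul_apply]
        exact Finset.sum_congr rfl fun j _ => smul_assoc r (M i j) (v j))
      (fun M v w => by ext i; simp [matSMulVec, Finset.sum_add_distrib])
      (fun r M v => by
        ext i
        simp only [matSMulVec, Finset.smul_sum, Pi.smul_apply]
        exact Finset.sum_congr rfl fun j _ => smul_comm _ _ _))
    1 (fun M v => by simpa using norm_matSMulVec_le M v)

theorem matOp_apply (M : Matrix (Fin p) (Fin p) ℂ) (v : Fin p → V) :
    matOp V p M v = matSMulVec M v := rfl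

theorem norm_matOp_le (M : Matrix (Fin p) (Fin p) ℂ) : ‖matOp V p M‖ ≤ ‖M‖ :=
  ContinuousLinearMap.opNorm_le_bound _ (norm_nonneg _) fun v => norm_matSMulVec_le M v

theorem matOp_mul (M N : Matrix (Fin p) (Fin p) ℂ) :
    matOp V p (M * N) = matOp V p M * matOp V p N := by
  refine ContinuousLinearMap.ext fun v => ?_
  change matSMulVec (M * N) v = matSMulVec M (matSMulVec N v)
  ext i
  simp only [matSMulVec, Matrix.mul_apply, Finset.sum_smul, Finset.smul_sum, mul_smul]
  exact Finset.sum_comm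

theorem matOp_one : matOp V p 1 = 1 := by
  refine ContinuousLinearMap.ext fun v => ?_
  change matSMulVec 1 v = v
  ext i
  simp [matSMulVec, Matrix.one_apply, ite_smul]

theorem matOp_green (Φ : ℝ → Matrix (Fin p) (Fin p) ℂ) (P : Matrix (Fin p) (Fin p) ℂ) (t s : ℝ) :
    matOp V p (GreenMat Φ P t s) =
      greenOp (fun t => matOp V p (Φ t)) (fun t => matOp V p (Φ t)⁻¹) (matOp V p P) t s := by
  unfold GreenMat greenOp
  split_ifs
  · simp only [matOp_mul]
  · simp only [map_neg, matOp_mul, map_sub, matOp_one]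

theorem hasDerivAt_matInv (A Φ : ℝ → Matrix (Fin p) (Fin p) ℂ) (h : IsFundamentalMatrix A Φ)
    (t : ℝ) : HasDerivAt (fun t => (Φ t)⁻¹) (-((Φ t)⁻¹ * A t)) t := by
  have hu := h.2 t
  have h1 := hasFDerivAt_ringInverse (𝕜 := ℝ) hu.unit
  rw [hu.unit_spec] at h1
  have h2 := h1.comp_hasDerivAt t (h.1 t)
  have hinv : (↑(hu.unit⁻¹) : Matrix (Fin p) (Fin p) ℂ) = (Φ t)⁻¹ := by
    rw [Matrix.nonsing_inv_eq_ringInverse, ← Ring.inverse_unit, hu.unit_spec]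
  have hm : Φ t * (Φ t)⁻¹ = 1 := Matrix.mul_nonsing_inv _ ((Matrix.isUnit_iff_isUnit_det _).1 hu)
  have hfun : (fun t => (Φ t)⁻¹) = Ring.inverse ∘ Φ := by
    ext1 s
    simp [Matrix.nonsing_inv_eq_ringInverse]
  rw [hfun]
  refine h2.congr_deriv ?_
  rw [hinv]
  change -((Φ t)⁻¹ * (A t * Φ t) * (Φ t)⁻¹) = _
  rw [mul_assoc, mul_assoc, hm, mul_one]

theorem joint_subseq {ι : Type*} (s : Finset ι) (ψ : ι → ℝ → ℂ)
    (h : ∀ i, AlmostAutomorphic (ψ i)) (σ : ℕ → ℝ) :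
    ∃ k : ℕ → ℕ, StrictMono k ∧ ∀ i ∈ s, ∃ ψt : ℝ → ℂ,
      (∀ t : ℝ, Tendsto (fun n => ψ i (t + σ (k n))) atTop (𝓝 (ψt t))) ∧
      (∀ t : ℝ, Tendsto (fun n => ψt (t - σ (k n))) atTop (𝓝 (ψ i t))) := by
  classical
  induction s using Finset.induction_on with
  | empty => exact ⟨id, strictMono_id, by simp⟩
  | insert a s _ ih =>
    obtain ⟨k, hk, hs⟩ := ih
    obtain ⟨l, hl, ψt, h1, h2⟩ := (h a).2 (fun n => σ (k n))
    refine ⟨k ∘ l, hk.comp hl, fun i hi => ?_⟩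
    rcases Finset.mem_insert.1 hi with rfl | hi
    · exact ⟨ψt, h1, h2⟩
    · obtain ⟨φ, g1, g2⟩ := hs i hi
      exact ⟨φ, fun t => (g1 t).comp hl.tendsto_atTop, fun t => (g2 t).comp hl.tendsto_atTop⟩

theorem tendsto_matrix (u : ℕ → Matrix (Fin p) (Fin p) ℂ) (M : Matrix (Fin p) (Fin p) ℂ)
    (h : ∀ i j, Tendsto (fun n => u n i j) atTop (𝓝 (M i j))) : Tendsto u atTop (𝓝 M) :=
  tendsto_pi_nhds.2 fun i => tendsto_pi_nhds.2 fun j => h i j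

theorem opDich_of (A Φ : ℝ → Matrix (Fin p) (Fin p) ℂ) (h : IsFundamentalMatrix A Φ)
    (P : Matrix (Fin p) (Fin p) ℂ) (hPcomm : ∀ t : ℝ, Φ t * P = P * Φ t)
    (c α : ℝ) (hc : 0 < c) (hα : 0 < α)
    (hdich : ∀ t s : ℝ, ‖GreenMat Φ P t s‖ ≤ c * Real.exp (-α * |t - s|)) :
    OpDich (fun t => matOp V p (A t)) (fun t => matOp V p (Φ t)) (fun t => matOp V p (Φ t)⁻¹)
      (matOp V p P) c α where
  hU t := by
    rw [← matOp_mul]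
    exact (matOp V p).hasFDerivAt.comp_hasDerivAt t (h.1 t)
  hR t := by
    rw [← matOp_mul, ← map_neg]
    exact (matOp V p).hasFDerivAt.comp_hasDerivAt t (hasDerivAt_matInv A Φ h t)
  hUR t := by
    rw [← matOp_mul, Matrix.mul_nonsing_inv _ ((Matrix.isUnit_iff_isUnit_det _).1 (h.2 t)),
      matOp_one]
  hRU t := by
    rw [← matOp_mul, Matrix.nonsing_inv_mul _ ((Matrix.isUnit_iff_isUnit_det _).1 (h.2 t)),
      matOp_one]
  hQ t := by rw [← matOp_mul, hPcomm, matOp_mul]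
  hα := hα
  hc := hc
  hG t s := by
    rw [← matOp_green]
    exact (norm_matOp_le _).trans (hdich t s)

end Concrete

theorem matrix_linear_equation_unique_almost_automorphic_solution
    {V : Type*} [NormedAddCommGroup V] [NormedSpace ℂ V] [CompleteSpace V] {p : ℕ}
    (A ΦA : ℝ → Matrix (Fin p) (Fin p) ℂ)
    (hAc : Continuous A) (hAb : ∃ C, ∀ t, ‖A t‖ ≤ C)
    (hAaa : ∀ i j : Fin p, AlmostAutomorphic (fun t => A t i j))
    (hΦA : IsFundamentalMatrix A ΦA)
    (P : Matrix (Fin p) (Fin p) ℂ) (hP : P * P = P)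
    (hPcomm : ∀ t : ℝ, ΦA t * P = P * ΦA t)
    (c α : ℝ) (hc : 0 < c) (hα : 0 < α)
    (hdich : ∀ t s : ℝ, ‖GreenMat ΦA P t s‖ ≤ c * Real.exp (-α * |t - s|))
    (f : ℝ → (Fin p → V)) (hfc : Continuous f) (hfb : ∃ C, ∀ t, ‖f t‖ ≤ C)
    (hfaa : AlmostAutomorphic f) :
    (∀ (t : ℝ) (i : Fin p),
      HasDerivAt (fun t => (∫ s : ℝ, matSMulVec (GreenMat ΦA P t s) (f s)) i)
        ((∑ j : Fin p, A t i j • (∫ s : ℝ, matSMulVec (GreenMat ΦA P t s) (f s)) j) + f t i)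
        t) ∧
    (∃ C, ∀ t : ℝ, ‖∫ s : ℝ, matSMulVec (GreenMat ΦA P t s) (f s)‖ ≤ C) ∧
    (∀ z : ℝ → (Fin p → V),
      (∀ (t : ℝ) (i : Fin p),
        HasDerivAt (fun t => z t i) ((∑ j : Fin p, A t i j • z t j) + f t i) t) →
      (∃ C, ∀ t : ℝ, ‖z t‖ ≤ C) →
      z = fun t => ∫ s : ℝ, matSMulVec (GreenMat ΦA P t s) (f s)) ∧
    AlmostAutomorphic (fun t => ∫ s : ℝ, matSMulVec (GreenMat ΦA P t s) (f s)) ∧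
    (∀ t : ℝ, ‖∫ s : ℝ, matSMulVec (GreenMat ΦA P t s) (f s)‖ ≤ (2 * c / α) * ⨆ t : ℝ, ‖f t‖) := by
  have hD := opDich_of (V := V) A ΦA hΦA P hPcomm c α hc hα hdich
  obtain ⟨C, hC⟩ := hAb
  obtain ⟨K, hK⟩ := hfb
  have hy : (fun t => ∫ s : ℝ, matSMulVec (GreenMat ΦA P t s) (f s)) = fun t =>
      ∫ s : ℝ, greenOp (fun t => matOp V p (ΦA t)) (fun t => matOp V p (ΦA t)⁻¹)
        (matOp V p P) t s (f s) := by
    ext1 t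
    refine integral_congr_ae (Eventually.of_forall fun s => ?_)
    simp only [← matOp_green]
    rfl
  set y : ℝ → (Fin p → V) := fun t => ∫ s : ℝ, matSMulVec (GreenMat ΦA P t s) (f s) with hydef
  have hyd : ∀ t, HasDerivAt y (matOp V p (A t) (y t) + f t) t := fun t => by
    rw [hy]; exact hD.deriv_green f hfc K hK t
  have hyb : ∀ K, (∀ t, ‖f t‖ ≤ K) → ∀ t, ‖y t‖ ≤ 2 * c / α * K := fun K hK t => by
    rw [hy]; exact hD.norm_le f K hK t
  refine ⟨fun t i => hasDerivAt_pi.1 (hyd t) i, ⟨_, hyb K hK⟩, ?_, ⟨?_, ?_⟩, ?_⟩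
  · rintro z hz ⟨M, hM⟩
    rw [hy]
    ext1 t
    exact hD.unique f hfc K hK z (fun t => hasDerivAt_pi.2 (hz t)) M hM t
  · exact continuous_iff_continuousAt.2 fun t => (hyd t).continuousAt
  · intro σ
    obtain ⟨k, hk, hs⟩ := joint_subseq Finset.univ (fun (q : Fin p × Fin p) t => A t q.1 q.2)
      (fun q => hAaa q.1 q.2) σ
    obtain ⟨l, hl, ft, hf1, hf2⟩ := hfaa.2 (fun n => σ (k n))
    choose ψ h1 h2 using fun q => hs q (Finset.mem_univ q)
    have hB1 : ∀ t, Tendsto (fun n => A (t + σ (k (l n)))) atTop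
        (𝓝 (Matrix.of fun i j => ψ (i, j) t)) := fun t =>
      tendsto_matrix _ _ fun i j => (h1 (i, j) t).comp hl.tendsto_atTop
    have hB2 : ∀ t, Tendsto (fun n => (Matrix.of fun i j => ψ (i, j) (t - σ (k (l n))) :
        Matrix (Fin p) (Fin p) ℂ)) atTop (𝓝 (A t)) := fun t =>
      tendsto_matrix _ _ fun i j => (h2 (i, j) t).comp hl.tendsto_atTop
    obtain ⟨yt, hy1, hy2⟩ := hD.aa ((matOp V p).continuous.comp hAc) C
      (fun t => (norm_matOp_le _).trans (hC t)) f hfc K hK y hy (fun n => σ (k (l n)))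
      (fun t => matOp V p (Matrix.of fun i j => ψ (i, j) t)) ft
      (fun t => ((matOp V p).continuous.tendsto _).comp (hB1 t))
      (fun t => ((matOp V p).continuous.tendsto _).comp (hB2 t)) hf1 hf2
    exact ⟨k ∘ l, hk.comp hl, yt, hy1, hy2⟩
  · exact hyb _ fun t => le_ciSup (f := fun t => ‖f t‖) ⟨K, by rintro _ ⟨t, rfl⟩; exact hK t⟩ t
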